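/- Fix integers d and k with 1 ≤ k < d − 1 (so d ≥ 3), a unit vector ψ ∈ ℂ^d, and a real number p. If (S, S_ch) is a parallel k-call probabilistic protocol satisfying S ⋆ U^{⊗k} = p · U̅|ψ⟩⟨ψ|Uᵀ for all U ∈ SU(d), then p = 0. That is, exact probabilistic complex conjugation of an unknown d-dimensional unitary on a known pure state is impossible with fewer than d−1 parallel calls, even with full classical knowledge of the input state. -/

import Mathlib

open Matrix Kronecker BigOperators ComplexOrder

noncomputable section

/-- Entrywise complex conjugate `U̅` of a matrix. -/
def mconj {d : ℕ} (U : Matrix (Fin d) (Fin d) ℂ) : Matrix (Fin d) (Fin d) ℂ :=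
  U.map (starRingEnd ℂ)

/-- Rank-one outer product `|v⟩⟨v|`. -/
def outer {n : Type*} (v : n → ℂ) : Matrix n n ℂ :=
  Matrix.vecMulVec v (star v)

/-- Choi vector `|U⟩⟩ = Σ_i e_i ⊗ U e_i`. -/
def choiVec {d : ℕ} (U : Matrix (Fin d) (Fin d) ℂ) : Fin d × Fin d → ℂ :=
  fun p => U p.2 p.1

/-- `|U⟩⟩⟨⟨U|`. -/
def choiProj {d : ℕ} (U : Matrix (Fin d) (Fin d) ℂ) :
    Matrix (Fin d × Fin d) (Fin d × Fin d) ℂ :=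
  outer (choiVec U)

/-- Partial trace over the first tensor factor. -/
def ptrLeft {α β : Type*} [Fintype α] (S : Matrix (α × β) (α × β) ℂ) :
    Matrix β β ℂ :=
  fun b b' => ∑ a, S (a, b) (a, b')

/-- Partial trace over the second (last) tensor factor. -/
def ptrRight {α β : Type*} [Fintype β] (S : Matrix (α × β) (α × β) ℂ) :
    Matrix α α ℂ :=
  fun a a' => ∑ b, S (a, b) (a', b)

/-- `(|U⟩⟩⟨⟨U|)^{⊗k}`, where the `j`-th copy acts on the `j`-th factor of `I`
and the `j`-th factor of `O`; `(ℂ^d)^{⊗k}` is indexed by `Fin k → Fin d`. -/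
def choiProjK {d : ℕ} (k : ℕ) (U : Matrix (Fin d) (Fin d) ℂ) :
    Matrix ((Fin k → Fin d) × (Fin k → Fin d)) ((Fin k → Fin d) × (Fin k → Fin d)) ℂ :=
  fun x y => ∏ j, choiProj U (x.1 j, x.2 j) (y.1 j, y.2 j)

/-- Action `S ⋆ U^{⊗k} := Tr_{IO}[ S · ((|U̅⟩⟩⟨⟨U̅|)^{⊗k}_{IO} ⊗ 1_F) ]` of a
parallel `k`-call supermap on the unitary channel given by `U`. -/
def actK {d k : ℕ}
    (S : Matrix (((Fin k → Fin d) × (Fin k → Fin d)) × Fin d)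
        (((Fin k → Fin d) × (Fin k → Fin d)) × Fin d) ℂ)
    (U : Matrix (Fin d) (Fin d) ℂ) : Matrix (Fin d) (Fin d) ℂ :=
  ptrLeft (S * (choiProjK k (mconj U) ⊗ₖ (1 : Matrix (Fin d) (Fin d) ℂ)))

/-- A parallel `k`-call probabilistic protocol: `0 ≤ S ≤ S_ch` with
`Tr_F(S_ch) = σ ⊗ 1_O`, `σ ≥ 0` on `(ℂ^d)^{⊗k}`, `Tr σ = 1`. -/
def IsProtocolK {d k : ℕ}
    (S Sch : Matrix (((Fin k → Fin d) × (Fin k → Fin d)) × Fin d)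
        (((Fin k → Fin d) × (Fin k → Fin d)) × Fin d) ℂ) : Prop :=
  S.PosSemidef ∧ (Sch - S).PosSemidef ∧
    ∃ σ : Matrix (Fin k → Fin d) (Fin k → Fin d) ℂ, σ.PosSemidef ∧ σ.trace = 1 ∧
      ptrRight Sch = σ ⊗ₖ (1 : Matrix (Fin k → Fin d) (Fin k → Fin d) ℂ)

/-! Put `Y := U̅`. The target is then `p · |Yψ⟩⟨Yψ|`, while `⟨x| S ⋆ U^{⊗k} |x⟩` is the value of
the quadratic form of `S` at `|Y⟩⟩^{⊗k} ⊗ x`. Since `S ≥ 0`, this says that `S` annihilates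
`|Y⟩⟩^{⊗k} ⊗ x` exactly when `p = 0` or `x ⟂ Yψ`. Both conditions are insensitive to rescaling
`Y`, so the equivalence extends from `SU(d)` to all unitary `Y`.

Choose a unitary `W` for which all coordinates of `Wψ` are equal and take `Y = diag(z) W` with
`z` on the torus. Then `z_f e_f - z_g e_g ⟂ Yψ` for all `f`, `g`, so each coordinate of
`S (|Y⟩⟩^{⊗k} ⊗ z_f e_f)`, a polynomial in `z`, does not depend on `f`: first on the torus,
hence identically. This polynomial is divisible by all `d` variables but has degree at most
`k + 1 < d`, so it vanishes. At `z = 1` it follows that `S` annihilates `|W⟩⟩^{⊗k} ⊗ e_f`,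
although `e_f` is not orthogonal to `Wψ`; hence `p = 0`. -/

section LinearAlgebra

/-- The tensor product `v ⊗ w` of two coordinate vectors, indexed by pairs like
`Matrix.kronecker`. -/
def tensorVec {α β R : Type*} [Mul R] (v : α → R) (w : β → R) : α × β → R :=
  fun q => v q.1 * w q.2

lemma tensorVec_smul_left {α β R : Type*} [Semigroup R] (c : R) (v : α → R) (w : β → R) :
    tensorVec (c • v) w = c • tensorVec v w :=
  funext fun _ => mul_assoc _ _ _

lemma mulVec_tensorVec_single {m α β R : Type*} [CommSemiring R] [Fintype α] [Fintype β]
    [DecidableEq β] (M : Matrix m (α × β) R) (v : α → R) (i : β) (c : R) (r : m) :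
    (M *ᵥ tensorVec v (Pi.single i c)) r = c * ((fun a => M r (a, i)) ⬝ᵥ v) := by
  simp only [mulVec, dotProduct, tensorVec, Fintype.sum_prod_type, Pi.single_apply, mul_ite,
    mul_zero, Finset.sum_ite_eq', Finset.mem_univ, if_true, Finset.mul_sum]
  exact Finset.sum_congr rfl fun a _ => by ring

lemma tensorVec_sub_right {α β R : Type*} [NonUnitalNonAssocRing R] (v : α → R) (w w' : β → R) :
    tensorVec v (w - w') = tensorVec v w - tensorVec v w' :=
  funext fun _ => mul_sub _ _ _

lemma dotProduct_ptrLeft_mulVec {α β : Type*} [Fintype α] [Fintype β] [DecidableEq β]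
    (S : Matrix (α × β) (α × β) ℂ) (v : α → ℂ) (x y : β → ℂ) :
    star x ⬝ᵥ ptrLeft (S * (outer v ⊗ₖ (1 : Matrix β β ℂ))) *ᵥ y =
      star (tensorVec v x) ⬝ᵥ S *ᵥ tensorVec v y := by
  have hentry (f g : β) : ptrLeft (S * (outer v ⊗ₖ (1 : Matrix β β ℂ))) f g =
      ∑ a, ∑ b, S (a, f) (b, g) * (v b * star (v a)) := by
    simp [ptrLeft, Matrix.mul_apply, Fintype.sum_prod_type, outer, vecMulVec_apply, one_apply]
  calc star x ⬝ᵥ ptrLeft (S * (outer v ⊗ₖ (1 : Matrix β β ℂ))) *ᵥ y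
      = ∑ f, ∑ a, ∑ b, ∑ g, star (v a) * star (x f) * (S (a, f) (b, g) * (v b * y g)) := by
        simp only [dotProduct, mulVec, hentry, Pi.star_apply, Finset.mul_sum, Finset.sum_mul]
        refine Finset.sum_congr rfl fun f _ => ?_
        rw [Finset.sum_comm_cycle, Finset.sum_comm_cycle]
        refine Finset.sum_congr rfl fun a _ => Finset.sum_congr rfl fun b _ => ?_
        exact Finset.sum_congr rfl fun g _ => by ring
    _ = star (tensorVec v x) ⬝ᵥ S *ᵥ tensorVec v y := by
        rw [Finset.sum_comm]
        simp only [dotProduct, mulVec, tensorVec, Fintype.sum_prod_type, Pi.star_apply, star_mul',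
          Finset.mul_sum]

lemma dotProduct_outer_mulVec {n : Type*} [Fintype n] (v x y : n → ℂ) :
    star x ⬝ᵥ outer v *ᵥ y = (star x ⬝ᵥ v) * (star v ⬝ᵥ y) := by
  simp [outer, vecMulVec_mulVec, mul_comm]

end LinearAlgebra

section UnitaryGroup

lemma exists_linearIsometryEquiv_apply_eq {𝕜 E : Type*} [RCLike 𝕜] [NormedAddCommGroup E]
    [InnerProductSpace 𝕜 E] [FiniteDimensional 𝕜 E] {x y : E} (h : ‖x‖ = ‖y‖) :
    ∃ L : E ≃ₗᵢ[𝕜] E, L x = y := by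
  rcases eq_or_ne x 0 with rfl | hx
  · exact ⟨.refl 𝕜 E, (norm_eq_zero.1 (by rw [← h, norm_zero])).symm⟩
  have hy : y ≠ 0 := norm_ne_zero_iff.1 (h ▸ norm_ne_zero_iff.2 hx)
  let x₁ : E := (‖x‖⁻¹ : 𝕜) • x
  let y₁ : E := (‖y‖⁻¹ : 𝕜) • y
  have hx₁ : ‖x₁‖ = 1 := norm_smul_inv_norm hx
  have hy₁ : ‖y₁‖ = 1 := norm_smul_inv_norm hy
  let e := LinearIsometryEquiv.toSpanUnitSingleton (𝕜 := 𝕜) x₁ hx₁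
  let M := (LinearIsometry.toSpanSingleton 𝕜 E hy₁).comp e.symm.toLinearIsometry
  have hM : M.extend x₁ = y₁ :=
    calc M.extend x₁ = M.extend (e 1) := by simp [e]
      _ = M (e 1) := M.extend_apply _
      _ = y₁ := by simp [M]
  refine ⟨M.extend.toLinearIsometryEquiv rfl, ?_⟩
  have hnorm : (‖x‖⁻¹ : 𝕜) ≠ 0 := by simpa using hx
  refine smul_right_injective E hnorm ?_
  simpa [x₁, y₁, ← h] using hM

lemma exists_mem_unitaryGroup_mulVec_eq {𝕜 n : Type*} [RCLike 𝕜] [Fintype n] [DecidableEq n]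
    {x y : n → 𝕜} (h : ‖WithLp.toLp 2 x‖ = ‖WithLp.toLp 2 y‖) :
    ∃ U ∈ unitaryGroup n 𝕜, U *ᵥ x = y := by
  obtain ⟨L, hL⟩ := exists_linearIsometryEquiv_apply_eq (𝕜 := 𝕜) h
  let b := EuclideanSpace.basisFun n 𝕜
  refine ⟨L.toMatrix b.toBasis b.toBasis, L.toMatrix_mem_unitaryGroup b b, ?_⟩
  have hrepr (w : n → 𝕜) : ⇑(b.toBasis.repr (WithLp.toLp 2 w)) = w := by ext; simp [b]
  have hmulVec := LinearMap.toMatrix_mulVec_repr b.toBasis b.toBasis L.toLinearMap (.toLp 2 x)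
  change _ = ⇑(b.toBasis.repr (L (.toLp 2 x))) at hmulVec
  rwa [hL, hrepr, hrepr] at hmulVec

lemma exists_mem_unitaryGroup_mulVec_eq_const {𝕜 n : Type*} [RCLike 𝕜] [Fintype n]
    [DecidableEq n] {x : n → 𝕜} (hx : x ≠ 0) :
    ∃ U ∈ unitaryGroup n 𝕜, ∃ u : 𝕜, u ≠ 0 ∧ U *ᵥ x = fun _ => u := by
  obtain ⟨i, -⟩ := Function.ne_iff.1 hx
  let e : EuclideanSpace 𝕜 n := WithLp.toLp 2 1
  have he : ‖e‖ ≠ 0 := norm_ne_zero_iff.2 fun h0 => one_ne_zero (congrArg (· i) h0)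
  let u : 𝕜 := ‖WithLp.toLp 2 x‖ / ‖e‖
  have hu : u ≠ 0 := by simpa [u, he] using hx
  obtain ⟨U, hU, hUx⟩ := exists_mem_unitaryGroup_mulVec_eq (x := x) (y := fun _ => u) <| by
    have hue : WithLp.toLp 2 (fun _ => u) = u • e := by ext; simp [e]
    rw [hue, norm_smul]
    simp [u, he]
  exact ⟨U, hU, u, hu, hUx⟩

lemma diagonal_mem_unitaryGroup {𝕜 n : Type*} [RCLike 𝕜] [Fintype n] [DecidableEq n]
    {z : n → 𝕜} (hz : ∀ i, ‖z i‖ = 1) : diagonal z ∈ unitaryGroup n 𝕜 := by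
  rw [mem_unitaryGroup_iff', star_eq_conjTranspose, diagonal_conjTranspose,
    diagonal_mul_diagonal, ← diagonal_one]
  simp [RCLike.conj_mul, hz]

lemma exists_smul_mem_specialUnitaryGroup {n : Type*} [Fintype n] [DecidableEq n] [Nonempty n]
    {U : Matrix n n ℂ} (hU : U ∈ unitaryGroup n ℂ) :
    ∃ c : ℂ, c ≠ 0 ∧ c • U ∈ specialUnitaryGroup n ℂ := by
  have hdet : ‖U.det‖ = 1 := CStarRing.norm_of_mem_unitary (det_of_mem_unitary hU)
  obtain ⟨c, hc⟩ := IsAlgClosed.exists_pow_nat_eq U.det⁻¹ (n := Fintype.card n) Fintype.card_pos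
  have hnorm : ‖c‖ = 1 := by
    rw [← pow_eq_one_iff_of_nonneg (norm_nonneg c) (Fintype.card_ne_zero (α := n)), ← norm_pow, hc,
      norm_inv, hdet, inv_one]
  have hdet0 : U.det ≠ 0 := norm_ne_zero_iff.1 (hdet ▸ one_ne_zero)
  refine ⟨c, norm_ne_zero_iff.1 (hnorm ▸ one_ne_zero), mem_specialUnitaryGroup_iff.2 ⟨?_, ?_⟩⟩
  · rw [← smul_one_mul, ← diagonal_one, ← diagonal_smul]
    exact mul_mem (diagonal_mem_unitaryGroup fun _ => by simpa using hnorm) hU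
  · rw [det_smul, hc, inv_mul_cancel₀ hdet0]

end UnitaryGroup

section MvPolynomial

open MvPolynomial

lemma eq_zero_of_forall_X_dvd {σ R : Type*} [Fintype σ] [CommSemiring R]
    {Q : MvPolynomial σ R} (hdeg : Q.totalDegree < Fintype.card σ) (hdvd : ∀ i, X i ∣ Q) :
    Q = 0 := by
  classical
  by_contra hQ
  obtain ⟨s, hs⟩ := support_nonempty.2 hQ
  have hpos (i : σ) : 1 ≤ s i := by
    obtain ⟨T, rfl⟩ := hdvd i
    have hi : i ∈ s.support := by
      by_contra hi
      rw [mem_support_iff, coeff_X_mul', if_neg hi] at hs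
      exact hs rfl
    exact Nat.one_le_iff_ne_zero.2 (Finsupp.mem_support_iff.1 hi)
  have hcard : Fintype.card σ ≤ s.sum fun _ e => e := by
    rw [Finsupp.sum_fintype _ _ fun _ => rfl, ← Finset.card_univ, Finset.card_eq_sum_ones]
    exact Finset.sum_le_sum fun i _ => hpos i
  exact (hcard.trans (le_totalDegree hs)).not_gt hdeg

lemma eq_zero_of_forall_mul_eval_eq {σ R : Type*} [Fintype σ] [CommRing R] [IsDomain R]
    {s : Set R} (hs : s.Infinite) {P : σ → MvPolynomial σ R}
    (hdeg : ∀ i, (P i).totalDegree + 1 < Fintype.card σ)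
    (heval : ∀ z : σ → R, (∀ i, z i ∈ s) →
      ∀ i j, z i * eval z (P i) = z j * eval z (P j)) (i : σ) : P i = 0 := by
  have hX (j : σ) : X i * P i = X j * P j :=
    funext_set (fun _ => s) (fun _ => hs) fun z hz => by
      simpa using heval z (fun l => hz l (Set.mem_univ l)) i j
  have hXP : X i * P i = 0 := by
    refine eq_zero_of_forall_X_dvd ?_ fun j => ⟨P j, hX j⟩
    calc (X i * P i).totalDegree ≤ (X i : MvPolynomial σ R).totalDegree + (P i).totalDegree :=
          totalDegree_mul _ _
      _ < Fintype.card σ := by rw [totalDegree_X, add_comm]; exact hdeg i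
  exact (mul_eq_zero.1 hXP).resolve_left (X_ne_zero i)

end MvPolynomial

lemma infinite_sphere_zero_one : (Metric.sphere (0 : ℂ) 1).Infinite := by
  have hconn : IsPreconnected (Metric.sphere (0 : ℂ) 1) :=
    isPreconnected_sphere (by simp [Complex.rank_real_complex]) _ _
  exact hconn.infinite_of_nontrivial ⟨1, by simp, -1, by simp, by norm_num⟩

section Choi

variable {d k : ℕ}

/-- The `k`-fold Choi vector `|Y⟩⟩^{⊗k}`, with the input and output factors grouped as in
`choiProjK`. -/
def choiVecK (k : ℕ) (Y : Matrix (Fin d) (Fin d) ℂ) : (Fin k → Fin d) × (Fin k → Fin d) → ℂ :=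
  fun a => ∏ j, choiVec Y (a.1 j, a.2 j)

lemma choiProjK_eq_outer (Y : Matrix (Fin d) (Fin d) ℂ) :
    choiProjK k Y = outer (choiVecK k Y) := by
  ext a b
  simp [choiProjK, choiProj, choiVecK, outer, vecMulVec_apply, Finset.prod_mul_distrib]

lemma choiVecK_smul (c : ℂ) (Y : Matrix (Fin d) (Fin d) ℂ) :
    choiVecK k (c • Y) = c ^ k • choiVecK k Y := by
  ext a
  simp [choiVecK, choiVec, Finset.prod_mul_distrib]

lemma choiVecK_diagonal_mul (z : Fin d → ℂ) (Y : Matrix (Fin d) (Fin d) ℂ)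
    (a : (Fin k → Fin d) × (Fin k → Fin d)) :
    choiVecK k (diagonal z * Y) a = (∏ j, z (a.2 j)) * choiVecK k Y a := by
  simp [choiVecK, choiVec, diagonal_mul, Finset.prod_mul_distrib]

open MvPolynomial in
/-- The polynomial in the diagonal entries of `diagonal z` whose value at `z` is the linear form
with coefficients `a` at `choiVecK k (diagonal z * W)`. -/
def choiPoly (a : (Fin k → Fin d) × (Fin k → Fin d) → ℂ) (W : Matrix (Fin d) (Fin d) ℂ) :
    MvPolynomial (Fin d) ℂ :=
  ∑ b, C (a b * choiVecK k W b) * ∏ j, X (b.2 j)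

lemma eval_choiPoly (a : (Fin k → Fin d) × (Fin k → Fin d) → ℂ) (W : Matrix (Fin d) (Fin d) ℂ)
    (z : Fin d → ℂ) :
    MvPolynomial.eval z (choiPoly a W) = a ⬝ᵥ choiVecK k (diagonal z * W) := by
  simp only [choiPoly, dotProduct, choiVecK_diagonal_mul, map_sum, map_mul, map_prod,
    MvPolynomial.eval_C, MvPolynomial.eval_X]
  exact Finset.sum_congr rfl fun b _ => by ring

lemma totalDegree_choiPoly_le (a : (Fin k → Fin d) × (Fin k → Fin d) → ℂ)
    (W : Matrix (Fin d) (Fin d) ℂ) : (choiPoly a W).totalDegree ≤ k := by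
  refine MvPolynomial.totalDegree_finsetSum_le fun b _ => ?_
  refine (MvPolynomial.totalDegree_mul _ _).trans ?_
  rw [MvPolynomial.totalDegree_C, zero_add]
  exact (MvPolynomial.totalDegree_finsetProd _ _).trans (by simp)

lemma mulVec_tensorVec_choiVecK_single_eq_zero {m : Type*}
    {M : Matrix m (((Fin k → Fin d) × (Fin k → Fin d)) × Fin d) ℂ} {W : Matrix (Fin d) (Fin d) ℂ}
    (hkd : k + 1 < d)
    (hM : ∀ z : Fin d → ℂ, (∀ i, ‖z i‖ = 1) → ∀ f g, M *ᵥ tensorVec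
      (choiVecK k (diagonal z * W)) (Pi.single f (z f) - Pi.single g (z g)) = 0) (f : Fin d) :
    M *ᵥ tensorVec (choiVecK k W) (Pi.single f 1) = 0 := by
  ext r
  let P (i : Fin d) := choiPoly (fun a => M r (a, i)) W
  have hP : P f = 0 := by
    refine eq_zero_of_forall_mul_eval_eq infinite_sphere_zero_one
      (fun i => ?_) (fun z hz i j => ?_) f
    · rw [Fintype.card_fin]
      exact (Nat.succ_le_succ (totalDegree_choiPoly_le _ _)).trans_lt hkd
    · have hr := congrFun (hM z (by simpa using hz) i j) r
      rw [tensorVec_sub_right, mulVec_sub, Pi.sub_apply, mulVec_tensorVec_single,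
        mulVec_tensorVec_single] at hr
      rw [eval_choiPoly, eval_choiPoly]
      exact sub_eq_zero.1 hr
  calc (M *ᵥ tensorVec (choiVecK k W) (Pi.single f 1)) r
      = MvPolynomial.eval 1 (P f) := by
        rw [mulVec_tensorVec_single, one_mul, eval_choiPoly, Pi.one_def, diagonal_one,
          Matrix.one_mul]
    _ = 0 := by rw [hP, map_zero]

end Choi

section Conjugation

variable {d k : ℕ}

lemma mconj_mconj (U : Matrix (Fin d) (Fin d) ℂ) : mconj (mconj U) = U := by
  ext i j
  simp [mconj]

lemma mconj_mem_specialUnitaryGroup {U : Matrix (Fin d) (Fin d) ℂ}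
    (hU : U ∈ specialUnitaryGroup (Fin d) ℂ) : mconj U ∈ specialUnitaryGroup (Fin d) ℂ := by
  obtain ⟨hunit, hdet⟩ := mem_specialUnitaryGroup_iff.1 hU
  refine mem_specialUnitaryGroup_iff.2 ⟨map_star_mem_unitaryGroup_iff.2 hunit, ?_⟩
  rw [mconj, ← RingHom.mapMatrix_apply, ← RingHom.map_det, hdet, map_one]

lemma mconj_mul_outer_mul_transpose (U : Matrix (Fin d) (Fin d) ℂ) (ψ : Fin d → ℂ) :
    mconj U * outer ψ * Uᵀ = outer (mconj U *ᵥ ψ) := by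
  have hU : Uᵀ = (mconj U)ᴴ := by
    ext i j
    simp [mconj]
  rw [hU, outer, outer, mul_vecMulVec, vecMulVec_mul, star_mulVec]

lemma dotProduct_actK_mulVec (S : Matrix (((Fin k → Fin d) × (Fin k → Fin d)) × Fin d)
    (((Fin k → Fin d) × (Fin k → Fin d)) × Fin d) ℂ) (U : Matrix (Fin d) (Fin d) ℂ)
    (x y : Fin d → ℂ) :
    star x ⬝ᵥ actK S U *ᵥ y =
      star (tensorVec (choiVecK k (mconj U)) x) ⬝ᵥ
        S *ᵥ tensorVec (choiVecK k (mconj U)) y := by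
  rw [actK, choiProjK_eq_outer, dotProduct_ptrLeft_mulVec]

variable {S : Matrix (((Fin k → Fin d) × (Fin k → Fin d)) × Fin d)
    (((Fin k → Fin d) × (Fin k → Fin d)) × Fin d) ℂ} {p : ℂ} {ψ : Fin d → ℂ}

lemma mulVec_tensorVec_choiVecK_mconj_eq_zero_iff (hS : S.PosSemidef) {U : Matrix (Fin d) (Fin d) ℂ}
    (hU : actK S U = p • (mconj U * outer ψ * Uᵀ)) (x : Fin d → ℂ) :
    S *ᵥ tensorVec (choiVecK k (mconj U)) x = 0 ↔ p = 0 ∨ star x ⬝ᵥ mconj U *ᵥ ψ = 0 := by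
  rw [← hS.dotProduct_mulVec_zero_iff, ← dotProduct_actK_mulVec, hU,
    mconj_mul_outer_mul_transpose, smul_mulVec, dotProduct_smul, dotProduct_outer_mulVec,
    star_dotProduct _ x]
  simp

lemma mulVec_tensorVec_choiVecK_eq_zero_iff [NeZero d] (hS : S.PosSemidef)
    (htarget : ∀ U ∈ specialUnitaryGroup (Fin d) ℂ, actK S U = p • (mconj U * outer ψ * Uᵀ))
    {Y : Matrix (Fin d) (Fin d) ℂ} (hY : Y ∈ unitaryGroup (Fin d) ℂ) (x : Fin d → ℂ) :
    S *ᵥ tensorVec (choiVecK k Y) x = 0 ↔ p = 0 ∨ star x ⬝ᵥ Y *ᵥ ψ = 0 := by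
  obtain ⟨c, hc, hcY⟩ := exists_smul_mem_specialUnitaryGroup hY
  have h := mulVec_tensorVec_choiVecK_mconj_eq_zero_iff hS
    (htarget _ (mconj_mem_specialUnitaryGroup hcY)) x
  simpa [mconj_mconj, choiVecK_smul, tensorVec_smul_left, mulVec_smul, smul_mulVec, hc] using h

end Conjugation

theorem conjugation_no_go_k_calls_general (d k : ℕ) (hkd : k + 1 < d) (p : ℂ) (ψ : Fin d → ℂ)
    (hψ : ψ ≠ 0)
    (S : Matrix (((Fin k → Fin d) × (Fin k → Fin d)) × Fin d)
        (((Fin k → Fin d) × (Fin k → Fin d)) × Fin d) ℂ)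
    (hS : S.PosSemidef)
    (htarget : ∀ U ∈ specialUnitaryGroup (Fin d) ℂ, actK S U = p • (mconj U * outer ψ * Uᵀ)) :
    p = 0 := by
  have : NeZero d := ⟨by omega⟩
  obtain ⟨W, hW, u, hu, hWψ⟩ := exists_mem_unitaryGroup_mulVec_eq_const hψ
  have hker : S *ᵥ tensorVec (choiVecK k W) (Pi.single 0 1) = 0 := by
    refine mulVec_tensorVec_choiVecK_single_eq_zero hkd (fun z hz f g => ?_) 0
    have hDW : diagonal z * W ∈ unitaryGroup (Fin d) ℂ :=
      mul_mem (diagonal_mem_unitaryGroup hz) hW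
    refine (mulVec_tensorVec_choiVecK_eq_zero_iff hS htarget hDW _).2 (Or.inr ?_)
    rw [← mulVec_mulVec, hWψ, star_sub, sub_dotProduct, ← Pi.single_star, ← Pi.single_star,
      single_dotProduct, single_dotProduct, mulVec_diagonal, mulVec_diagonal]
    simp [← mul_assoc, Complex.conj_mul', hz]
  refine ((mulVec_tensorVec_choiVecK_eq_zero_iff hS htarget hW _).1 hker).resolve_right ?_
  simpa [hWψ, ← Pi.single_star] using hu

/-- **No-go for probabilistic exact conjugation with `k < d−1` parallel calls,
known pure input state.** (`k + 1 < d` is equivalent to `k < d − 1`.) -/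
theorem conjugation_no_go_k_calls
    (d k : ℕ) (hk : 1 ≤ k) (hkd : k + 1 < d) (p : ℝ)
    (ψ : Fin d → ℂ) (hψ : star ψ ⬝ᵥ ψ = 1)
    (S Sch : Matrix (((Fin k → Fin d) × (Fin k → Fin d)) × Fin d)
        (((Fin k → Fin d) × (Fin k → Fin d)) × Fin d) ℂ)
    (hprot : IsProtocolK S Sch)
    (htarget : ∀ U : Matrix (Fin d) (Fin d) ℂ, U ∈ Matrix.specialUnitaryGroup (Fin d) ℂ →
      actK S U = (p : ℂ) • (mconj U * outer ψ * Uᵀ)) :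
    p = 0 := by
  exact_mod_cast conjugation_no_go_k_calls_general d k hkd p ψ
    (by rintro rfl; simp at hψ) S hprot.1 htarget
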